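/- Let Ξ be a nonempty set, (E, Δ) a metric space, T > 0, and X = (X_t)_{t∈[0,T]} a family of functions X_t: Ξ → E. For n ∈ ℕ let S_n = {T j 2^{−n} : j = 0, …, 2^n}, and for t ∈ [0,T] let t_n^− = max{s ∈ S_n : s ≤ t} and t_n^+ = min{s ∈ S_n : s > t} (for t ∈ S_{n+1}∖S_n one has t_n^−, t_n^+ ∈ S_n). Define g_n: Ξ × S_{n+1} → S_n by: g_n(ω, t) = t if t ∈ S_n; for t ∈ S_{n+1}∖S_n, g_n(ω, t) = t_n^− if Δ(X_t(ω), X_{t_n^−}(ω)) ≤ Δ(X_t(ω), X_{t_n^+}(ω)), and g_n(ω, t) = t_n^+ otherwise. For integers n ≥ m let f_{m,n}(ω, ·) = g_m(ω, ·) ∘ ⋯ ∘ g_n(ω, ·): S_{n+1} → S_m. Then: (i) for every ω and n, g_n(ω, ·) is non-decreasing on S_{n+1} and is the identity on S_n, and consequently f_{m,n}(ω, ·) is non-decreasing on S_{n+1}; (ii) there exists a family of functions f_n: Ξ × [0,T] → S_n, n ∈ ℕ, such that for each ω the map f_n(ω, ·) is a non-decreasing, right-continuous step function, and such that f_{m,n}(ω,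 f_{n+1}(ω, t)) = f_m(ω, t) for all n ≥ m, t ∈ [0,T], ω ∈ Ξ, and |t − f_n(ω, t)| ≤ T 2^{−n} for all ω ∈ Ξ, t ∈ [0,T], n ∈ ℕ. -/

import Mathlib

open Filter Set Topology

noncomputable section

/-- The dyadic grid `S_n = {T j 2^{−n} : j = 0, …, 2^n}`. -/
def dyadic (T : ℝ) (n : ℕ) : Set ℝ := {s | ∃ j : ℕ, j ≤ 2 ^ n ∧ s = T * j / 2 ^ n}

/-- `t_n^− = max {s ∈ S_n : s ≤ t}`. -/
noncomputable def dyadFloor (T : ℝ) (n : ℕ) (t : ℝ) : ℝ :=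
  sSup {s | s ∈ dyadic T n ∧ s ≤ t}

/-- `t_n^+ = min {s ∈ S_n : s > t}`. -/
noncomputable def dyadCeil (T : ℝ) (n : ℕ) (t : ℝ) : ℝ :=
  sInf {s | s ∈ dyadic T n ∧ t < s}

open Classical in
/-- The map `g_n : Ξ × S_{n+1} → S_n`: the identity on `S_n`, and on `S_{n+1}∖S_n`
it picks the neighbouring dyadic point of level `n` closer to `X_t` (preferring
`t_n^−` in case of a tie). -/
noncomputable def gFun {Ξ E : Type*} [MetricSpace E] (T : ℝ) (X : ℝ → Ξ → E)
    (n : ℕ) (ω : Ξ) (t : ℝ) : ℝ :=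
  if t ∈ dyadic T n then t
  else if dist (X t ω) (X (dyadFloor T n t) ω) ≤ dist (X t ω) (X (dyadCeil T n t) ω)
    then dyadFloor T n t else dyadCeil T n t

/-- Auxiliary recursion: `fComp m k = g_m ∘ ⋯ ∘ g_{m+k}`. -/
noncomputable def fComp {Ξ E : Type*} [MetricSpace E] (T : ℝ) (X : ℝ → Ξ → E)
    (m : ℕ) : ℕ → Ξ → ℝ → ℝ
  | 0, ω, t => gFun T X m ω t
  | k + 1, ω, t => fComp T X m k ω (gFun T X (m + k + 1) ω t)

/-- `f_{m,n} = g_m ∘ ⋯ ∘ g_n` (for `n ≥ m`). -/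
noncomputable def fmn {Ξ E : Type*} [MetricSpace E] (T : ℝ) (X : ℝ → Ξ → E)
    (m n : ℕ) (ω : Ξ) (t : ℝ) : ℝ :=
  fComp T X m (n - m) ω t

lemma dyadic_finite (T : ℝ) (n : ℕ) : (dyadic T n).Finite := by
  refine ((Set.finite_Iic (2 ^ n : ℕ)).image (fun j : ℕ => T * j / 2 ^ n)).subset ?_
  rintro s ⟨j, hj, rfl⟩
  exact ⟨j, hj, rfl⟩

lemma zero_mem_dyadic (T : ℝ) (n : ℕ) : (0 : ℝ) ∈ dyadic T n := ⟨0, by simp, by simp⟩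

lemma top_mem_dyadic (T : ℝ) (n : ℕ) : T ∈ dyadic T n :=
  ⟨2 ^ n, le_rfl, by push_cast; field_simp⟩

lemma dyadic_succ (T : ℝ) (n : ℕ) : dyadic T n ⊆ dyadic T (n + 1) := by
  rintro s ⟨j, hj, rfl⟩
  refine ⟨2 * j, by rw [pow_succ]; omega, ?_⟩
  push_cast
  rw [pow_succ]
  field_simp

lemma dyadic_mono (T : ℝ) {m n : ℕ} (h : m ≤ n) : dyadic T m ⊆ dyadic T n :=
  monotone_nat_of_le_succ (f := dyadic T) (dyadic_succ T) h

lemma dyadic_sub_Icc {T : ℝ} (hT : 0 < T) (n : ℕ) : dyadic T n ⊆ Icc 0 T := by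
  rintro s ⟨j, hj, rfl⟩
  refine ⟨by positivity, ?_⟩
  rw [div_le_iff₀ (by positivity)]
  have : (j : ℝ) ≤ 2 ^ n := by exact_mod_cast hj
  gcongr

lemma dyadic_between {T : ℝ} (hT : 0 < T) {n : ℕ} {s t : ℝ} (hs : s ∈ dyadic T (n + 1))
    (ht : t ∈ dyadic T (n + 1)) (hst : s < t) : ∃ a ∈ dyadic T n, s ≤ a ∧ a ≤ t := by
  obtain ⟨j, hj, rfl⟩ := hs
  obtain ⟨k, hk, rfl⟩ := ht
  have hjk : j < k := by
    by_contra! h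
    have : (k : ℝ) ≤ j := by exact_mod_cast h
    have : T * k / 2 ^ (n + 1) ≤ T * j / 2 ^ (n + 1) := by gcongr
    linarith
  have hp : 2 ^ (n + 1) = 2 * 2 ^ n := by rw [pow_succ]; ring
  have key : T * ((j + 1) / 2 : ℕ) / 2 ^ n = T * ((2 * ((j + 1) / 2) : ℕ) : ℝ) / 2 ^ (n + 1) := by
    push_cast
    rw [pow_succ]
    field_simp
  refine ⟨T * ((j + 1) / 2 : ℕ) / 2 ^ n, ⟨(j + 1) / 2, by omega, rfl⟩, ?_, ?_⟩
  · rw [key]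
    have : (j : ℝ) ≤ (2 * ((j + 1) / 2) : ℕ) := by exact_mod_cast (by omega)
    gcongr
  · rw [key]
    have : ((2 * ((j + 1) / 2) : ℕ) : ℝ) ≤ k := by exact_mod_cast (by omega)
    gcongr

lemma dyadic_near {T : ℝ} (hT : 0 < T) (n : ℕ) {t : ℝ} (ht : t ∈ Icc 0 T) :
    ∃ a ∈ dyadic T n, ∃ b ∈ dyadic T n, a ≤ t ∧ t ≤ b ∧ (t < b ∨ b = T) ∧ b - a ≤ T / 2 ^ n := by
  rcases eq_or_lt_of_le ht.2 with h | h
  · subst h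
    exact ⟨t, top_mem_dyadic t n, t, top_mem_dyadic t n, le_rfl, le_rfl, Or.inr rfl,
      by rw [sub_self]; positivity⟩
  · have h0 : 0 ≤ t * 2 ^ n / T := by have := ht.1; positivity
    have h1 := Nat.floor_le h0
    have h2 := Nat.lt_floor_add_one (t * 2 ^ n / T)
    set j := ⌊t * 2 ^ n / T⌋₊
    rw [le_div_iff₀ hT] at h1
    rw [div_lt_iff₀ hT] at h2
    have hp : (0 : ℝ) < 2 ^ n := by positivity
    have hj : j < 2 ^ n := by
      have : (j : ℝ) < 2 ^ n := by
        by_contra! hc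
        nlinarith
      exact_mod_cast this
    have hb : t < T * ((j + 1 : ℕ) : ℝ) / 2 ^ n := by
      rw [lt_div_iff₀ hp]; push_cast; linarith
    refine ⟨T * j / 2 ^ n, ⟨j, hj.le, rfl⟩, T * ((j + 1 : ℕ) : ℝ) / 2 ^ n, ⟨j + 1, hj, rfl⟩,
      ?_, hb.le, Or.inl hb, ?_⟩
    · rw [div_le_iff₀ hp]; linarith
    · push_cast
      apply le_of_eq
      ring

section
variable {Ξ E : Type*} [MetricSpace E] {T : ℝ} (X : ℝ → Ξ → E)

lemma gFun_id (n : ℕ) (ω : Ξ) {t : ℝ} (ht : t ∈ dyadic T n) : gFun T X n ω t = t := by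
  simp [gFun, ht]

lemma gFun_spec (n : ℕ) (ω : Ξ) {t : ℝ} (ht : t ∈ Icc 0 T) :
    gFun T X n ω t ∈ dyadic T n ∧ (∀ a ∈ dyadic T n, a ≤ t → a ≤ gFun T X n ω t) ∧
      (∀ a ∈ dyadic T n, t ≤ a → gFun T X n ω t ≤ a) := by
  by_cases h : t ∈ dyadic T n
  · rw [gFun_id X n ω h]
    exact ⟨h, fun _ _ h => h, fun _ _ h => h⟩
  have htT : t < T := lt_of_le_of_ne ht.2 (fun h' => h (h' ▸ top_mem_dyadic t n))
  have f1 : {s | s ∈ dyadic T n ∧ s ≤ t}.Finite := (dyadic_finite T n).subset fun _ h => h.1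
  have f2 : {s | s ∈ dyadic T n ∧ t < s}.Finite := (dyadic_finite T n).subset fun _ h => h.1
  have m1 : dyadFloor T n t ∈ {s | s ∈ dyadic T n ∧ s ≤ t} :=
    Set.Nonempty.csSup_mem ⟨0, zero_mem_dyadic T n, ht.1⟩ f1
  have m2 : dyadCeil T n t ∈ {s | s ∈ dyadic T n ∧ t < s} :=
    Set.Nonempty.csInf_mem ⟨T, top_mem_dyadic T n, htT⟩ f2
  have l1 : ∀ a ∈ dyadic T n, a ≤ t → a ≤ dyadFloor T n t := fun a ha hat =>
    le_csSup f1.bddAbove ⟨ha, hat⟩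
  have l2 : ∀ a ∈ dyadic T n, t ≤ a → dyadCeil T n t ≤ a := fun a ha hat =>
    csInf_le f2.bddBelow ⟨ha, lt_of_le_of_ne hat (fun h' => h (h' ▸ ha))⟩
  rw [gFun, if_neg h]
  split_ifs
  · exact ⟨m1.1, l1, fun a _ h => m1.2.trans h⟩
  · exact ⟨m2.1, fun a _ h => h.trans m2.2.le, l2⟩

lemma gFun_mono (hT : 0 < T) (n : ℕ) (ω : Ξ) :
    MonotoneOn (gFun T X n ω) (dyadic T (n + 1)) := by
  intro s hs t ht hst
  rcases eq_or_lt_of_le hst with rfl | h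
  · exact le_rfl
  obtain ⟨a, ha, h1, h2⟩ := dyadic_between hT hs ht h
  exact ((gFun_spec X n ω (dyadic_sub_Icc hT _ hs)).2.2 a ha h1).trans
    ((gFun_spec X n ω (dyadic_sub_Icc hT _ ht)).2.1 a ha h2)

lemma fComp_mem (hT : 0 < T) (m k : ℕ) (ω : Ξ) : ∀ {t : ℝ}, t ∈ dyadic T (m + k + 1) →
    fComp T X m k ω t ∈ dyadic T m := by
  induction k with
  | zero => intro t ht; exact (gFun_spec X m ω (dyadic_sub_Icc hT _ ht)).1
  | succ k ih => intro t ht; exact ih (gFun_spec X (m + k + 1) ω (dyadic_sub_Icc hT _ ht)).1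

lemma fComp_mono (hT : 0 < T) (m k : ℕ) (ω : Ξ) :
    MonotoneOn (fComp T X m k ω) (dyadic T (m + k + 1)) := by
  induction k with
  | zero => exact gFun_mono X hT m ω
  | succ k ih =>
    intro s hs t ht hst
    exact ih (gFun_spec X (m + k + 1) ω (dyadic_sub_Icc hT _ hs)).1
      (gFun_spec X (m + k + 1) ω (dyadic_sub_Icc hT _ ht)).1 (gFun_mono X hT (m + k + 1) ω hs ht hst)

lemma fComp_stable (m k l : ℕ) (h : k ≤ l) (ω : Ξ) {t : ℝ} (ht : t ∈ dyadic T (m + k + 1)) :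
    fComp T X m l ω t = fComp T X m k ω t := by
  induction l, h using Nat.le_induction with
  | base => rfl
  | succ l h ih =>
    rw [← ih]
    change fComp T X m l ω (gFun T X (m + l + 1) ω t) = _
    rw [gFun_id X (m + l + 1) ω (dyadic_mono T (by omega) ht)]

lemma fComp_id (m k : ℕ) (ω : Ξ) {t : ℝ} (ht : t ∈ dyadic T m) :
    fComp T X m k ω t = t := by
  rw [fComp_stable X m 0 k (Nat.zero_le _) ω (dyadic_succ T m ht)]
  exact gFun_id X m ω ht

lemma fComp_comp (m k l : ℕ) (ω : Ξ) : ∀ t : ℝ,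
    fComp T X m k ω (fComp T X (m + k + 1) l ω t) = fComp T X m (k + l + 1) ω t := by
  induction l with
  | zero => intro t; rfl
  | succ l ih =>
    intro t
    change fComp T X m k ω (fComp T X (m + k + 1) l ω (gFun T X (m + k + 1 + l + 1) ω t)) =
      fComp T X m (k + l + 1) ω (gFun T X (m + (k + l + 1) + 1) ω t)
    rw [ih, show m + k + 1 + l + 1 = m + (k + l + 1) + 1 by omega]

/-- All dyadic points. -/
def dyAll (T : ℝ) : Set ℝ := {s | ∃ n, s ∈ dyadic T n}

open Classical in
/-- The limit of the compositions on dyadic points. -/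
def fLim (T : ℝ) (X : ℝ → Ξ → E) (m : ℕ) (ω : Ξ) (s : ℝ) : ℝ :=
  if h : s ∈ dyAll T then fComp T X m h.choose ω s else 0

lemma fLim_eq (m k : ℕ) (ω : Ξ) {s : ℝ} (hs : s ∈ dyadic T (m + k + 1)) :
    fLim T X m ω s = fComp T X m k ω s := by
  have h : s ∈ dyAll T := ⟨_, hs⟩
  rw [fLim, dif_pos h]
  have h1 : s ∈ dyadic T (m + h.choose + 1) := dyadic_mono T (by omega) h.choose_spec
  rw [← fComp_stable X m _ _ (le_max_left _ k) ω h1,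
    ← fComp_stable X m _ _ (le_max_right h.choose k) ω hs]

lemma fLim_mem (hT : 0 < T) (m : ℕ) (ω : Ξ) {s : ℝ} (hs : s ∈ dyAll T) :
    fLim T X m ω s ∈ dyadic T m := by
  obtain ⟨n, hn⟩ := hs
  have h1 : s ∈ dyadic T (m + n + 1) := dyadic_mono T (by omega) hn
  rw [fLim_eq X m n ω h1]
  exact fComp_mem X hT m n ω h1

lemma fLim_id (m : ℕ) (ω : Ξ) {s : ℝ} (hs : s ∈ dyadic T m) : fLim T X m ω s = s := by
  rw [fLim_eq X m 0 ω (dyadic_succ T m hs), fComp_id X m 0 ω hs]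

lemma fLim_mono (hT : 0 < T) (m : ℕ) (ω : Ξ) : MonotoneOn (fLim T X m ω) (dyAll T) := by
  rintro s ⟨a, ha⟩ t ⟨b, hb⟩ hst
  have h1 : s ∈ dyadic T (m + (a + b) + 1) := dyadic_mono T (by omega) ha
  have h2 : t ∈ dyadic T (m + (a + b) + 1) := dyadic_mono T (by omega) hb
  rw [fLim_eq X m _ ω h1, fLim_eq X m _ ω h2]
  exact fComp_mono X hT m _ ω h1 h2 hst

lemma fLim_comp (m k : ℕ) (ω : Ξ) {s : ℝ} (hs : s ∈ dyAll T) :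
    fComp T X m k ω (fLim T X (m + k + 1) ω s) = fLim T X m ω s := by
  obtain ⟨n, hn⟩ := hs
  rw [fLim_eq X (m + k + 1) n ω (dyadic_mono T (by omega) hn), fComp_comp,
    fLim_eq X m (k + n + 1) ω (dyadic_mono T (by omega) hn)]

/-- Dyadic points to the right of `t` (together with `T`). -/
def dyRight (T t : ℝ) : Set ℝ := {s | s ∈ dyAll T ∧ (t < s ∨ s = T)}

/-- The right-continuous extension. -/
def fExt (T : ℝ) (X : ℝ → Ξ → E) (m : ℕ) (ω : Ξ) (t : ℝ) : ℝ :=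
  sInf (fLim T X m ω '' dyRight T t)

lemma dyRight_image_finite (hT : 0 < T) (m : ℕ) (ω : Ξ) (t : ℝ) :
    (fLim T X m ω '' dyRight T t).Finite := by
  refine (dyadic_finite T m).subset ?_
  rintro _ ⟨s, hs, rfl⟩
  exact fLim_mem X hT m ω hs.1

lemma fExt_attained (hT : 0 < T) (m : ℕ) (ω : Ξ) (t : ℝ) :
    ∃ s ∈ dyRight T t, fLim T X m ω s = fExt T X m ω t := by
  have h : (dyRight T t).Nonempty := ⟨T, ⟨0, top_mem_dyadic T 0⟩, Or.inr rfl⟩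
  exact Set.Nonempty.csInf_mem (h.image _) (dyRight_image_finite X hT m ω t)

lemma fExt_le (hT : 0 < T) (m : ℕ) (ω : Ξ) {t s : ℝ} (hs : s ∈ dyRight T t) :
    fExt T X m ω t ≤ fLim T X m ω s :=
  csInf_le (dyRight_image_finite X hT m ω t).bddBelow ⟨s, hs, rfl⟩

lemma fExt_mono (hT : 0 < T) (m : ℕ) (ω : Ξ) : Monotone (fExt T X m ω) := by
  intro t u htu
  obtain ⟨s, hs, h⟩ := fExt_attained X hT m ω u
  rw [← h]
  exact fExt_le X hT m ω ⟨hs.1, hs.2.imp_left htu.trans_lt⟩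

lemma fExt_comp (hT : 0 < T) (m k : ℕ) (ω : Ξ) (t : ℝ) :
    fComp T X m k ω (fExt T X (m + k + 1) ω t) = fExt T X m ω t := by
  obtain ⟨s, hs, h⟩ := fExt_attained X hT m ω t
  obtain ⟨u, hu, h'⟩ := fExt_attained X hT (m + k + 1) ω t
  have hm : min s u ∈ dyRight T t := by
    rcases min_choice s u with e | e <;> rw [e] <;> assumption
  have e1 : fLim T X m ω (min s u) = fExt T X m ω t :=
    le_antisymm (h ▸ fLim_mono X hT m ω hm.1 hs.1 (min_le_left _ _)) (fExt_le X hT m ω hm)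
  have e2 : fLim T X (m + k + 1) ω (min s u) = fExt T X (m + k + 1) ω t :=
    le_antisymm (h' ▸ fLim_mono X hT _ ω hm.1 hu.1 (min_le_right _ _)) (fExt_le X hT _ ω hm)
  rw [← e1, ← e2, fLim_comp X m k ω hm.1]

end

/-- **Lemma (dyadic approximation scheme).**
(i) `g_n(ω,·)` is non-decreasing on `S_{n+1}` and the identity on `S_n`; consequently
`f_{m,n}(ω,·)` is non-decreasing on `S_{n+1}`.
(ii) There are non-decreasing right-continuous step functions
`f_n : Ξ × [0,T] → S_n` with `f_{m,n}(ω, f_{n+1}(ω,t)) = f_m(ω,t)` for `n ≥ m` and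
`|t − f_n(ω,t)| ≤ T 2^{−n}`. -/
theorem dyadic_approximation_scheme {Ξ E : Type*} [Nonempty Ξ] [MetricSpace E]
    (T : ℝ) (hT : 0 < T) (X : ℝ → Ξ → E) :
    (∀ (ω : Ξ) (n : ℕ),
      MonotoneOn (gFun T X n ω) (dyadic T (n + 1)) ∧
      (∀ t ∈ dyadic T n, gFun T X n ω t = t) ∧
      (∀ m : ℕ, m ≤ n → MonotoneOn (fmn T X m n ω) (dyadic T (n + 1)))) ∧
    ∃ f : ℕ → Ξ → ℝ → ℝ,
      (∀ (n : ℕ) (ω : Ξ),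
        (∀ t ∈ Set.Icc (0 : ℝ) T, f n ω t ∈ dyadic T n) ∧
        MonotoneOn (f n ω) (Set.Icc (0 : ℝ) T) ∧
        (∀ t ∈ Set.Ico (0 : ℝ) T,
          Tendsto (f n ω) (nhdsWithin t (Set.Ioc t T)) (nhds (f n ω t)))) ∧
      (∀ m n : ℕ, m ≤ n → ∀ (ω : Ξ) (t : ℝ), t ∈ Set.Icc (0 : ℝ) T →
        fmn T X m n ω (f (n + 1) ω t) = f m ω t) ∧
      (∀ (n : ℕ) (ω : Ξ) (t : ℝ), t ∈ Set.Icc (0 : ℝ) T →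
        |t - f n ω t| ≤ T / 2 ^ n) := by
  refine ⟨fun ω n => ⟨gFun_mono X hT n ω, fun t ht => gFun_id X n ω ht, fun m hm => ?_⟩,
    fExt T X, fun n ω => ⟨fun t _ => ?_, (fExt_mono X hT n ω).monotoneOn _, fun t ht => ?_⟩,
    fun m n hmn ω t _ => ?_, fun n ω t ht => ?_⟩
  · obtain ⟨k, rfl⟩ := Nat.exists_eq_add_of_le hm
    have := fComp_mono X hT m k ω
    intro s hs t ht hst
    simp only [fmn, Nat.add_sub_cancel_left]
    exact this hs ht hst
  · obtain ⟨s, hs, h⟩ := fExt_attained X hT n ω t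
    rw [← h]
    exact fLim_mem X hT n ω hs.1
  · obtain ⟨s, hs, h⟩ := fExt_attained X hT n ω t
    have hts : t < s := hs.2.elim id (fun e => e ▸ ht.2)
    refine tendsto_const_nhds.congr' ?_
    have h1 : Iio s ∈ nhdsWithin t (Set.Ioc t T) := mem_nhdsWithin_of_mem_nhds (Iio_mem_nhds hts)
    filter_upwards [h1, self_mem_nhdsWithin] with u hu hu'
    refine le_antisymm (fExt_mono X hT n ω hu'.1.le) ?_
    rw [← h]
    exact fExt_le X hT n ω ⟨hs.1, Or.inl hu⟩
  · obtain ⟨k, rfl⟩ := Nat.exists_eq_add_of_le hmn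
    simp only [fmn, Nat.add_sub_cancel_left]
    exact fExt_comp X hT m k ω t
  · obtain ⟨a, ha, b, hb, hat, htb, hb', hab⟩ := dyadic_near hT n ht
    have h1 : fExt T X n ω t ≤ b := by
      have := fExt_le X hT n ω (t := t) (s := b) ⟨⟨n, hb⟩, hb'⟩
      rwa [fLim_id X n ω hb] at this
    have h2 : a ≤ fExt T X n ω t := by
      obtain ⟨s, hs, h⟩ := fExt_attained X hT n ω t
      rw [← h, ← fLim_id X n ω ha]
      refine fLim_mono X hT n ω ⟨n, ha⟩ hs.1 (hat.trans ?_)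
      exact hs.2.elim le_of_lt (fun e => e ▸ ht.2)
    rw [abs_le]
    constructor <;> linarith

end
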